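/- For every natural number n ≥ 1, the diameter of the set I_n = {1, 2, …, n} with respect to the metric d equals ξ₂(n) + ξ₃(n); that is, sup{d(x,y) : x, y ∈ I_n} = ξ₂(n) + ξ₃(n), where ξ₂(n) and ξ₃(n) are the integer parts of the base-2 and base-3 logarithms of n respectively. -/

import Mathlib

/-- Ω(n): the number of prime factors of n counted with multiplicity. -/
def Omega (n : ℕ) : ℕ := n.primeFactorsList.length

/-- The arithmetic distance d(a,b) = Ω(lcm(a,b)) − Ω(gcd(a,b)). -/
def arithDist (a b : ℕ) : ℕ := Omega (Nat.lcm a b) - Omega (Nat.gcd a b)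

/-!
Dividing two numbers by their gcd preserves their distance, so only coprime pairs `a, b ≤ n`
matter, and for these the distance is `Ω a + Ω b`. A product of `k` primes, all at least `q`, is at
least `q ^ k`; hence every positive number up to `n` has at most `log 2 n` prime factors, and every
odd one at most `log 3 n`. One of two coprime numbers is odd, and the bound is attained by the
largest powers of `2` and `3` up to `n`.
-/

open scoped ArithmeticFunction.Omega

open ArithmeticFunction

theorem cardFactors_le_log {b n : ℕ} (hb : 1 < b) (h : ∀ p, p.Prime → p ∣ n → b ≤ p) :
    Ω n ≤ Nat.log b n := by
  rcases eq_or_ne n 0 with rfl | hn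
  · simp
  have h_factors : ∀ p ∈ n.primeFactorsList, b ≤ p := fun p hp =>
    h p (Nat.prime_of_mem_primeFactorsList hp) (Nat.dvd_of_mem_primeFactorsList hp)
  apply Nat.le_log_of_pow_le hb
  calc
    b ^ Ω n = b ^ n.primeFactorsList.length := by rw [cardFactors_apply]
    _ ≤ n.primeFactorsList.prod := List.pow_card_le_prod _ _ h_factors
    _ = n := Nat.prod_primeFactorsList hn

theorem cardFactors_le_log_two (n : ℕ) : Ω n ≤ Nat.log 2 n :=
  cardFactors_le_log one_lt_two fun _ hp _ => hp.two_le

theorem cardFactors_le_log_three_of_odd {n : ℕ} (hn : Odd n) : Ω n ≤ Nat.log 3 n :=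
  cardFactors_le_log (by norm_num) fun _ hp hpn =>
    hp.two_le.lt_of_ne' (hn.ne_two_of_dvd_nat hpn)

theorem cardFactors_add_le_of_coprime {a b n : ℕ} (hab : a.Coprime b) (ha : a ≤ n) (hb : b ≤ n) :
    Ω a + Ω b ≤ Nat.log 2 n + Nat.log 3 n := by
  wlog hb_odd : Odd b generalizing a b
  · have ha_odd : Odd a :=
      Nat.coprime_two_right.mp (hab.coprime_dvd_right (Nat.not_odd_iff_even.mp hb_odd).two_dvd)
    rw [add_comm]
    exact this hab.symm hb ha ha_odd
  exact add_le_add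
    ((cardFactors_le_log_two a).trans (Nat.log_mono_right ha))
    ((cardFactors_le_log_three_of_odd hb_odd).trans (Nat.log_mono_right hb))

theorem arithDist_eq_cardFactors_sub (a b : ℕ) : arithDist a b = Ω (a.lcm b) - Ω (a.gcd b) :=
  rfl

theorem arithDist_mul_right {a b g : ℕ} (ha : a ≠ 0) (hb : b ≠ 0) (hg : g ≠ 0) :
    arithDist (a * g) (b * g) = arithDist a b := by
  simp only [arithDist_eq_cardFactors_sub, Nat.lcm_mul_right, Nat.gcd_mul_right,
    cardFactors_mul (Nat.lcm_ne_zero ha hb) hg, cardFactors_mul (Nat.gcd_ne_zero_left ha) hg,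
    Nat.add_sub_add_right]

theorem arithDist_of_coprime {a b : ℕ} (ha : a ≠ 0) (hb : b ≠ 0) (hab : a.Coprime b) :
    arithDist a b = Ω a + Ω b := by
  rw [arithDist_eq_cardFactors_sub, hab.lcm_eq_mul, hab.gcd_eq_one, cardFactors_mul ha hb,
    cardFactors_one, Nat.sub_zero]

theorem arithDist_prime_pow {p q : ℕ} (hp : p.Prime) (hq : q.Prime) (hpq : p ≠ q) (k l : ℕ) :
    arithDist (p ^ k) (q ^ l) = k + l := by
  have h_coprime : (p ^ k).Coprime (q ^ l) := Nat.coprime_pow_primes k l hp hq hpq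
  rw [arithDist_of_coprime (pow_ne_zero k hp.ne_zero) (pow_ne_zero l hq.ne_zero) h_coprime,
    cardFactors_apply_prime_pow hp, cardFactors_apply_prime_pow hq]

theorem arithDist_le_log_add_log {x y n : ℕ} (hx : x ∈ Set.Icc 1 n) (hy : y ∈ Set.Icc 1 n) :
    arithDist x y ≤ Nat.log 2 n + Nat.log 3 n := by
  have hx₀ : x ≠ 0 := Nat.one_le_iff_ne_zero.mp hx.1
  have hy₀ : y ≠ 0 := Nat.one_le_iff_ne_zero.mp hy.1
  obtain ⟨a, b, hab, hxa, hyb⟩ := Nat.exists_coprime x y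
  have hax : a ∣ x := Dvd.intro _ hxa.symm
  have hby : b ∣ y := Dvd.intro _ hyb.symm
  have ha₀ : a ≠ 0 := ne_zero_of_dvd_ne_zero hx₀ hax
  have hb₀ : b ≠ 0 := ne_zero_of_dvd_ne_zero hy₀ hby
  calc
    arithDist x y = arithDist (a * x.gcd y) (b * x.gcd y) := by rw [← hxa, ← hyb]
    _ = arithDist a b := arithDist_mul_right ha₀ hb₀ (Nat.gcd_ne_zero_left hx₀)
    _ = Ω a + Ω b := arithDist_of_coprime ha₀ hb₀ hab
    _ ≤ Nat.log 2 n + Nat.log 3 n :=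
      cardFactors_add_le_of_coprime hab
        ((Nat.le_of_dvd hx.1 hax).trans hx.2) ((Nat.le_of_dvd hy.1 hby).trans hy.2)

theorem pow_log_mem_Icc {b n : ℕ} (hb : b ≠ 0) (hn : n ≠ 0) : b ^ Nat.log b n ∈ Set.Icc 1 n :=
  ⟨Nat.one_le_pow _ _ (Nat.pos_of_ne_zero hb), Nat.pow_log_le_self b hn⟩

theorem diameter_Icc_eq (n : ℕ) (hn : 1 ≤ n) :
    sSup {m : ℕ | ∃ x ∈ Set.Icc 1 n, ∃ y ∈ Set.Icc 1 n, arithDist x y = m} =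
      Nat.log 2 n + Nat.log 3 n := by
  apply IsGreatest.csSup_eq
  constructor
  · have hn₀ : n ≠ 0 := Nat.one_le_iff_ne_zero.mp hn
    exact ⟨2 ^ Nat.log 2 n, pow_log_mem_Icc two_ne_zero hn₀,
      3 ^ Nat.log 3 n, pow_log_mem_Icc three_ne_zero hn₀,
      arithDist_prime_pow Nat.prime_two Nat.prime_three (by norm_num) _ _⟩
  · rintro _ ⟨x, hx, y, hy, rfl⟩
    exact arithDist_le_log_add_log hx hy
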